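/- arXiv:2007.10889 — 2 statements merged into one kernel-verified Lean document; each statement's English description precedes it below -/
import Mathlib

section
/- A blur shift space Σ_Λ, with the subspace topology inherited from the full blur shift Σ, is first countable if and only if for every H ∈ V_Λ the set H ∩ B_1(Λ) is countable. -/
open Set Filter Topology

namespace BlurPaper

/-- The extended alphabet `Ā = A ⊕ V`, where each blurred set `H ∈ V` is regarded
as a new symbol `H̃`. -/
abbrev Symb (A : Type*) (V : Set (Set A)) := A ⊕ {H : Set A // H ∈ V}

/-- `V` is a family of blurred sets: every member is infinite and two distinct members
have finite intersection. -/
def IsBlurFamily {A : Type*} (V : Set (Set A)) : Prop :=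
  (∀ H ∈ V, H.Infinite) ∧ ∀ G ∈ V, ∀ H ∈ V, G ≠ H → (G ∩ H).Finite

/-- The full blur shift `Σ`: sequences over `Ā` such that a blur symbol is followed
by the same blur symbol. -/
def FullBlur (A : Type*) (V : Set (Set A)) : Set (ℕ → Symb A V) :=
  {x | ∀ (i : ℕ) (H : {H : Set A // H ∈ V}), x i = Sum.inr H → x (i + 1) = Sum.inr H}

/-- Generalized cylinder `Z(α)`. -/
def Z (A : Type*) (V : Set (Set A)) (α : List A) : Set (FullBlur A V) :=
  {x | ∀ i : Fin α.length, x.1 i = Sum.inl (α.get i)}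

/-- Generalized cylinder `Z(α, H, F)`. -/
def ZH (A : Type*) (V : Set (Set A)) (α : List A) (H : {H : Set A // H ∈ V})
    (F : Set A) : Set (FullBlur A V) :=
  {x | (∀ i : Fin α.length, x.1 i = Sum.inl (α.get i)) ∧
    (x.1 α.length = Sum.inr H ∨ ∃ a ∈ H.1 \ F, x.1 α.length = Sum.inl a)}

/-- The collection of all generalized cylinders. -/
def Cylinders (A : Type*) (V : Set (Set A)) : Set (Set (FullBlur A V)) :=
  {U | ∃ α : List A, U = Z A V α} ∪
  {U | ∃ (α : List A) (H : {H : Set A // H ∈ V}) (F : Set A),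
    F ⊆ H.1 ∧ F.Finite ∧ U = ZH A V α H F}

/-- The topology on the full blur shift generated by the generalized cylinders. -/
def tau (A : Type*) (V : Set (Set A)) : TopologicalSpace (FullBlur A V) :=
  TopologicalSpace.generateFrom (Cylinders A V)

/-- The shift map on the full blur shift. -/
def shift (A : Type*) (V : Set (Set A)) : FullBlur A V → FullBlur A V :=
  fun x => ⟨fun i => x.1 (i + 1), fun i H h => x.2 (i + 1) H h⟩

/-- The shift map on `A^ℕ`. -/
def shiftSeq (A : Type*) : (ℕ → A) → ℕ → A := fun x i => x (i + 1)

/-- The prodiscrete topology on `A^ℕ` (product of discrete topologies). -/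
def prodDiscrete (A : Type*) : TopologicalSpace (ℕ → A) :=
  @Pi.topologicalSpace ℕ (fun _ => A) fun _ => ⊥

/-- A (classical) shift space over `A`: closed in the prodiscrete topology and
invariant under the shift map. -/
def IsShiftSpace {A : Type*} (Λ : Set (ℕ → A)) : Prop :=
  @IsClosed _ (prodDiscrete A) Λ ∧ ∀ x ∈ Λ, shiftSeq A x ∈ Λ

/-- `w ∈ B(Y)`: the finite word `w` appears as an initial word of some element of `Y`. -/
def InLang {A : Type*} (Y : Set (ℕ → A)) (w : List A) : Prop :=
  ∃ x ∈ Y, ∀ i : Fin w.length, x i = w.get i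

/-- The follower set `F_Y(w) = {a : w a ∈ B(Y)}`. -/
def Fol {A : Type*} (Y : Set (ℕ → A)) (w : List A) : Set A :=
  {a | InLang Y (w ++ [a])}

/-- The predecessor set `P_Y(a) = {b : b a ∈ B(Y)}`. -/
def Pred {A : Type*} (Y : Set (ℕ → A)) (a : A) : Set A :=
  {b | InLang Y [b, a]}

/-- `B₁(Y)`: the set of letters occurring in sequences of `Y`. -/
def letters {A : Type*} (Y : Set (ℕ → A)) : Set A :=
  {a | ∃ x ∈ Y, ∃ i, x i = a}

/-- The canonical embedding `A^ℕ → Σ`. -/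
def embed (A : Type*) (V : Set (Set A)) : (ℕ → A) → FullBlur A V :=
  fun x => ⟨fun i => Sum.inl (x i), fun _ _ h => absurd h (by simp)⟩

/-- The point `(a₀ … a_{n-1} H̃ H̃ H̃ …)` of the full blur shift. -/
def wordBlur {A : Type*} {V : Set (Set A)} (α : List A) (H : {H : Set A // H ∈ V}) :
    FullBlur A V :=
  ⟨fun i => if h : i < α.length then Sum.inl (α.get ⟨i, h⟩) else Sum.inr H, by
    intro i K hK
    by_cases h : i < α.length
    · simp only [dif_pos h] at hK
      exact absurd hK (by simp)
    · simp only [dif_neg h] at hK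
      simp only [dif_neg (by omega : ¬ i + 1 < α.length)]
      exact hK⟩

/-- The boundary `∂Y`: points `(a₀ … a_{n-1} H̃ H̃ …)` with `a₀ … a_{n-1} ∈ B(Y)` and
`F_Y(a₀ … a_{n-1}) ∩ H` infinite. -/
def boundary (A : Type*) (V : Set (Set A)) (Y : Set (ℕ → A)) : Set (FullBlur A V) :=
  {z | ∃ (α : List A) (H : {H : Set A // H ∈ V}),
    z = wordBlur α H ∧ InLang Y α ∧ (Fol Y α ∩ H.1).Infinite}

/-- The blur shift space `Σ_Y = Y ∪ ∂Y` of `Y` with resolution `V`. -/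
def SigmaOf (A : Type*) (V : Set (Set A)) (Y : Set (ℕ → A)) : Set (FullBlur A V) :=
  embed A V '' Y ∪ boundary A V Y

/-- The subspace topology inherited from the full blur shift. -/
def subTau (A : Type*) (V : Set (Set A)) (X : Set (FullBlur A V)) :
    TopologicalSpace X :=
  TopologicalSpace.induced Subtype.val (tau A V)

/-- `V_Λ`: the blurred sets that appear in `Σ_Λ`, i.e. those meeting `B₁(Λ)` in an
infinite set. -/
def VLam (A : Type*) (V : Set (Set A)) (Λ : Set (ℕ → A)) : Set (Set A) :=
  {H | H ∈ V ∧ (letters Λ ∩ H).Infinite}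

/-!
The cylinders over the prefixes of a sequence `y ∈ Λ` form a countable neighbourhood base at `y`,
so first countability can only fail at a point `αH̃H̃…`. There the sets `Z(α, H, F)` form a base,
and inside `Σ_Λ` only the letters of `F` that lie in `F_Λ(α)` matter. The neighbourhoods are thus
indexed by the finite subsets of `F_Λ(α) ∩ H`, and they admit a countable base exactly when
`F_Λ(α) ∩ H` is countable. Finally `F_Λ(α) ⊆ B₁(Λ)`, and shift invariance gives equality for the
empty word, so these conditions together amount to the countability of each `H ∩ B₁(Λ)`.
-/

section TopologicalSpace

lemma hasBasis_nhds_generateFrom {X ι : Type*} {g : Set (Set X)} {x : X} {p : ι → Prop}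
    {s : ι → Set X} (nonempty : ∃ i, p i)
    (directed : ∀ i, p i → ∀ j, p j → ∃ k, p k ∧ s k ⊆ s i ∧ s k ⊆ s j)
    (mem : ∀ i, p i → x ∈ s i ∧ s i ∈ g) (subset : ∀ C ∈ g, x ∈ C → ∃ i, p i ∧ s i ⊆ C) :
    (@nhds X (TopologicalSpace.generateFrom g) x).HasBasis p s := by
  have nhds_eq : @nhds X (TopologicalSpace.generateFrom g) x = ⨅ (i) (_ : p i), 𝓟 (s i) := by
    rw [TopologicalSpace.nhds_generateFrom]
    refine le_antisymm (le_iInf₂ fun i hi => iInf₂_le (s i) (mem i hi)) (le_iInf₂ fun C hC => ?_)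
    obtain ⟨i, hi, hiC⟩ := subset C hC.2 hC.1
    exact iInf₂_le_of_le i hi (principal_mono.2 hiC)
  rw [nhds_eq]
  exact hasBasis_biInf_principal' directed nonempty

lemma firstCountableTopology_subtype_iff {X : Type*} [TopologicalSpace X] {s : Set X} :
    FirstCountableTopology s ↔ ∀ x ∈ s, (𝓝[s] x).IsCountablyGenerated := by
  refine ⟨fun _ x hx => ?_, fun h => ⟨fun x => ?_⟩⟩
  · rw [← map_nhds_subtype_val ⟨x, hx⟩]
    infer_instance
  · have := h x x.2
    rw [nhds_subtype_eq_comap_nhdsWithin]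
    infer_instance

end TopologicalSpace

section Cylinders

variable {A : Type*} {V : Set (Set A)} {α β : List A} {G H : {H : Set A // H ∈ V}}
  {F F' : Set A} {x z : FullBlur A V}

lemma mem_Z_iff : x ∈ Z A V α ↔ ∀ (i : ℕ) (hi : i < α.length), x.1 i = Sum.inl α[i] :=
  Fin.forall_iff

lemma mem_Z_congr (h : ∀ i < α.length, z.1 i = x.1 i) : z ∈ Z A V α ↔ x ∈ Z A V α :=
  forall_congr' fun i => by rw [h i i.2]

lemma mem_ZH_congr (h : ∀ i ≤ α.length, z.1 i = x.1 i) :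
    z ∈ ZH A V α H F ↔ x ∈ ZH A V α H F :=
  and_congr (mem_Z_congr fun i hi => h i hi.le) (by rw [h _ le_rfl])

lemma ZH_subset_Z : ZH A V α H F ⊆ Z A V α := fun _ hz => hz.1

lemma ZH_anti (h : F ⊆ F') : ZH A V α H F' ⊆ ZH A V α H F :=
  fun _ hz => ⟨hz.1, hz.2.imp_right fun ⟨a, ha, hza⟩ => ⟨a, ⟨ha.1, fun haF => ha.2 (h haF)⟩, hza⟩⟩

lemma mem_Z_append_singleton {a : A} :
    z ∈ Z A V (α ++ [a]) ↔ z ∈ Z A V α ∧ z.1 α.length = Sum.inl a := by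
  simp only [mem_Z_iff, List.length_append, List.length_singleton]
  refine ⟨fun h => ⟨fun i hi => ?_, ?_⟩, fun ⟨hα, ha⟩ i hi => ?_⟩
  · simpa [List.getElem_append_left hi] using h i (by omega)
  · simpa using h α.length (by omega)
  · rcases Nat.lt_succ_iff_lt_or_eq.1 hi with hi | rfl
    · simpa [List.getElem_append_left hi] using hα i hi
    · simpa using ha

lemma mem_Z_ofFn {y : ℕ → A} {n : ℕ} :
    z ∈ Z A V (List.ofFn fun i : Fin n => y i) ↔ ∀ i < n, z.1 i = (embed A V y).1 i := by
  simp [mem_Z_iff, embed]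

lemma wordBlur_apply_of_lt {i : ℕ} (hi : i < α.length) : (wordBlur α H).1 i = Sum.inl α[i] :=
  dif_pos hi

lemma wordBlur_apply_of_le {i : ℕ} (hi : α.length ≤ i) : (wordBlur α H).1 i = Sum.inr H :=
  dif_neg hi.not_gt

lemma wordBlur_mem_ZH : wordBlur α H ∈ ZH A V α H F :=
  ⟨mem_Z_iff.2 fun _ => wordBlur_apply_of_lt, Or.inl (wordBlur_apply_of_le le_rfl)⟩

lemma apply_eq_wordBlur (hz : z ∈ Z A V α) {i : ℕ} (hi : i < α.length) :
    z.1 i = (wordBlur α H).1 i := by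
  rw [wordBlur_apply_of_lt hi, mem_Z_iff.1 hz i hi]

lemma length_le_of_wordBlur_mem_Z (h : wordBlur α H ∈ Z A V β) : β.length ≤ α.length := by
  by_contra! hlt
  have := mem_Z_iff.1 h α.length hlt
  simp [wordBlur_apply_of_le] at this

lemma Z_subset_of_wordBlur_mem (h : wordBlur α H ∈ Z A V β) : Z A V α ⊆ Z A V β :=
  fun _ hz => (mem_Z_congr fun _ hi =>
    apply_eq_wordBlur hz (hi.trans_le (length_le_of_wordBlur_mem_Z h))).2 h

lemma eq_of_wordBlur_mem_ZH (h : wordBlur α H ∈ ZH A V β G F) (hle : α.length ≤ β.length) :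
    G = H := by
  simpa [wordBlur_apply_of_le hle, eq_comm] using h.2

lemma exists_ZH_subset_of_wordBlur_mem {C : Set (FullBlur A V)} (hC : C ∈ Cylinders A V)
    (h : wordBlur α H ∈ C) : ∃ F : Set A, (F ⊆ H.1 ∧ F.Finite) ∧ ZH A V α H F ⊆ C := by
  rcases hC with ⟨β, rfl⟩ | ⟨β, G, F, hFG, hF, rfl⟩
  · exact ⟨∅, by simp, ZH_subset_Z.trans (Z_subset_of_wordBlur_mem h)⟩
  · rcases (length_le_of_wordBlur_mem_Z h.1).lt_or_eq with hlt | heq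
    · exact ⟨∅, by simp, fun z hz =>
        (mem_ZH_congr fun i hi => apply_eq_wordBlur hz.1 (hi.trans_lt hlt)).2 h⟩
    · obtain rfl := eq_of_wordBlur_mem_ZH h heq.ge
      exact ⟨F, ⟨hFG, hF⟩, fun z hz => ⟨Z_subset_of_wordBlur_mem h.1 hz.1, heq ▸ hz.2⟩⟩

end Cylinders

section Neighbourhoods

variable {A : Type*} {V : Set (Set A)}

instance : TopologicalSpace (FullBlur A V) := tau A V

lemma hasBasis_nhds_wordBlur (α : List A) (H : {H : Set A // H ∈ V}) :
    (𝓝 (wordBlur α H)).HasBasis (fun F : Set A => F ⊆ H.1 ∧ F.Finite) (ZH A V α H) :=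
  hasBasis_nhds_generateFrom ⟨∅, by simp⟩
    (fun F hF F' hF' => ⟨F ∪ F', ⟨union_subset hF.1 hF'.1, hF.2.union hF'.2⟩,
      ZH_anti subset_union_left, ZH_anti subset_union_right⟩)
    (fun F hF => ⟨wordBlur_mem_ZH, Or.inr ⟨α, H, F, hF.1, hF.2, rfl⟩⟩)
    (fun _ => exists_ZH_subset_of_wordBlur_mem)

lemma exists_Z_subset_of_embed_mem {y : ℕ → A} {C : Set (FullBlur A V)}
    (hC : C ∈ Cylinders A V) (hy : embed A V y ∈ C) :
    ∃ n : ℕ, Z A V (List.ofFn fun i : Fin n => y i) ⊆ C := by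
  rcases hC with ⟨β, rfl⟩ | ⟨β, G, F, -, -, rfl⟩
  · exact ⟨β.length, fun z hz => (mem_Z_congr (mem_Z_ofFn.1 hz)).2 hy⟩
  · exact ⟨β.length + 1, fun z hz =>
      (mem_ZH_congr fun i hi => mem_Z_ofFn.1 hz i (Nat.lt_succ_of_le hi)).2 hy⟩

lemma hasBasis_nhds_embed (y : ℕ → A) :
    (𝓝 (embed A V y)).HasBasis (fun _ : ℕ => True)
      fun n => Z A V (List.ofFn fun i : Fin n => y i) := by
  have anti {m n : ℕ} (hmn : m ≤ n) :
      Z A V (List.ofFn fun i : Fin n => y i) ⊆ Z A V (List.ofFn fun i : Fin m => y i) :=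
    fun z hz => mem_Z_ofFn.2 fun i hi => mem_Z_ofFn.1 hz i (hi.trans_le hmn)
  refine hasBasis_nhds_generateFrom ⟨0, trivial⟩
    (fun m _ n _ => ⟨max m n, trivial, anti (le_max_left m n), anti (le_max_right m n)⟩)
    (fun n _ => ⟨mem_Z_ofFn.2 fun _ _ => rfl, Or.inl ⟨_, rfl⟩⟩) fun C hC hy => ?_
  obtain ⟨n, hn⟩ := exists_Z_subset_of_embed_mem hC hy
  exact ⟨n, trivial, hn⟩

end Neighbourhoods

section Language

variable {A : Type*} {V : Set (Set A)} {Y : Set (ℕ → A)} {w : List A} {a : A}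

lemma embed_mem_Z_iff {y : ℕ → A} :
    embed A V y ∈ Z A V w ↔ ∀ i : Fin w.length, y i = w.get i :=
  forall_congr' fun _ => Sum.inl_injective.eq_iff

lemma inLang_of_mem_Z {z : FullBlur A V} (hz : z ∈ SigmaOf A V Y) (hw : z ∈ Z A V w) :
    InLang Y w := by
  rcases hz with ⟨y, hy, rfl⟩ | ⟨α, H, rfl, ⟨y, hy, hyα⟩, -⟩
  · exact ⟨y, hy, embed_mem_Z_iff.1 hw⟩
  · exact ⟨y, hy, embed_mem_Z_iff.1 (Z_subset_of_wordBlur_mem hw (embed_mem_Z_iff.2 hyα))⟩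

lemma exists_embed_of_mem_fol (V : Set (Set A)) (h : a ∈ Fol Y w) :
    ∃ y ∈ Y, embed A V y ∈ Z A V w ∧ (embed A V y).1 w.length = Sum.inl a := by
  obtain ⟨y, hy, hyw⟩ := h
  exact ⟨y, hy, mem_Z_append_singleton.1 (embed_mem_Z_iff.2 hyw)⟩

lemma fol_subset_letters : Fol Y w ⊆ letters Y := by
  rintro a ⟨y, hy, hya⟩
  exact ⟨y, hy, w.length, by simpa using hya ⟨w.length, by simp⟩⟩

lemma inLang_of_mem_fol (h : a ∈ Fol Y w) : InLang Y w := by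
  obtain ⟨y, hy, hyw, -⟩ := exists_embed_of_mem_fol ∅ h
  exact ⟨y, hy, embed_mem_Z_iff.1 hyw⟩

lemma shiftSeq_iterate_apply (x : ℕ → A) (m n : ℕ) :
    (shiftSeq A)^[m] x n = x (n + m) := by
  induction m generalizing n with
  | zero => rfl
  | succ m ih => rw [Function.iterate_succ_apply', shiftSeq, ih, Nat.succ_add_eq_add_succ]

lemma fol_nil (hY : MapsTo (shiftSeq A) Y Y) : Fol Y [] = letters Y := by
  refine fol_subset_letters.antisymm ?_
  rintro _ ⟨y, hy, n, rfl⟩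
  refine ⟨(shiftSeq A)^[n] y, hY.iterate n hy, fun i => ?_⟩
  simp [shiftSeq_iterate_apply, Fin.eq_zero i]

end Language

section FirstCountable

variable {A : Type*} {V : Set (Set A)} {Y : Set (ℕ → A)}

lemma hasBasis_nhdsWithin_wordBlur (Y : Set (ℕ → A)) (α : List A) (H : {H : Set A // H ∈ V}) :
    (𝓝[SigmaOf A V Y] wordBlur α H).HasBasis
      (fun F : Set A => F.Finite ∧ F ⊆ Fol Y α ∩ H.1)
      fun F => ZH A V α H F ∩ SigmaOf A V Y := by
  refine (nhdsWithin_hasBasis (hasBasis_nhds_wordBlur α H) _).to_hasBasis ?_ ?_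
  · rintro F ⟨hFH, hF⟩
    refine ⟨Fol Y α ∩ F, ⟨hF.inter_of_right _, inter_subset_inter_right _ hFH⟩, ?_⟩
    rintro z ⟨⟨hzα, hz⟩, hzY⟩
    refine ⟨⟨hzα, hz.imp_right ?_⟩, hzY⟩
    rintro ⟨a, ⟨haH, haF⟩, hza⟩
    have ha : a ∈ Fol Y α := inLang_of_mem_Z hzY (mem_Z_append_singleton.2 ⟨hzα, hza⟩)
    exact ⟨a, ⟨haH, fun h => haF ⟨ha, h⟩⟩, hza⟩
  · rintro F ⟨hF, hFsub⟩
    exact ⟨F, ⟨hFsub.trans inter_subset_right, hF⟩, subset_rfl⟩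

/-- Choosing for each `a ∈ F_Y(α) ∩ H` a point of `Y` that starts with `αa` gives a family which
tends to `αH̃H̃…` along the cofinite filter, and no member of it lies in all neighbourhoods of
the limit. -/
lemma countable_fol_inter_of_isCountablyGenerated (α : List A) (H : {H : Set A // H ∈ V})
    [(𝓝[SigmaOf A V Y] wordBlur α H).IsCountablyGenerated] : (Fol Y α ∩ H.1).Countable := by
  choose y hyY hyα hya using fun a : ↥(Fol Y α ∩ H.1) => exists_embed_of_mem_fol V a.2.1
  have basis := hasBasis_nhdsWithin_wordBlur Y α H
  have tendsto :
      Tendsto (fun a => embed A V (y a)) cofinite (𝓝[SigmaOf A V Y] wordBlur α H) := by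
    refine basis.tendsto_right_iff.2 fun F hF => ?_
    filter_upwards [(hF.1.preimage Subtype.val_injective.injOn).compl_mem_cofinite] with a ha
    exact ⟨⟨hyα a, Or.inr ⟨a, ⟨a.2.2, ha⟩, hya a⟩⟩, Or.inl ⟨y a, hyY a, rfl⟩⟩
  have preimage_ker :
      (fun a => embed A V (y a)) ⁻¹' (𝓝[SigmaOf A V Y] wordBlur α H).ker = ∅ := by
    refine eq_empty_of_forall_notMem fun a hker => ?_
    have := (hker _ (basis.mem_of_mem ⟨finite_singleton a.1, singleton_subset_iff.2 a.2⟩)).1.2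
    simp [hya] at this
  have countable := tendsto.countable_compl_preimage_ker
  rwa [preimage_ker, compl_empty, countable_univ_iff, countable_coe_iff] at countable

lemma isCountablyGenerated_nhdsWithin_wordBlur_iff (α : List A) (H : {H : Set A // H ∈ V}) :
    (𝓝[SigmaOf A V Y] wordBlur α H).IsCountablyGenerated ↔ (Fol Y α ∩ H.1).Countable :=
  ⟨fun _ => countable_fol_inter_of_isCountablyGenerated α H, fun h =>
    HasCountableBasis.isCountablyGenerated
      ⟨hasBasis_nhdsWithin_wordBlur Y α H, countable_ofPred_finite_subset h⟩⟩

theorem firstCountableTopology_sigmaOf_iff :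
    FirstCountableTopology (SigmaOf A V Y) ↔
      ∀ (α : List A) (H : {H : Set A // H ∈ V}), (Fol Y α ∩ H.1).Countable := by
  rw [firstCountableTopology_subtype_iff]
  refine ⟨fun h α H => ?_, ?_⟩
  · by_contra hnc
    have hinf : (Fol Y α ∩ H.1).Infinite := fun hfin => hnc hfin.countable
    obtain ⟨a, ha, -⟩ := hinf.nonempty
    exact hnc ((isCountablyGenerated_nhdsWithin_wordBlur_iff α H).1
      (h _ (Or.inr ⟨α, H, rfl, inLang_of_mem_fol ha, hinf⟩)))
  · rintro h _ (⟨y, -, rfl⟩ | ⟨α, H, rfl, -⟩)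
    · have := (hasBasis_nhds_embed (V := V) y).isCountablyGenerated
      exact Inf.isCountablyGenerated _ _
    · exact (isCountablyGenerated_nhdsWithin_wordBlur_iff α H).2 (h α H)

end FirstCountable

theorem firstCountable_iff_general {A : Type*} (V : Set (Set A)) (Λ : Set (ℕ → A))
    (hΛ : MapsTo (shiftSeq A) Λ Λ) :
    @FirstCountableTopology (SigmaOf A V Λ) (subTau A V (SigmaOf A V Λ)) ↔
      ∀ H ∈ VLam A V Λ, (H ∩ letters Λ).Countable := by
  refine firstCountableTopology_sigmaOf_iff.trans ⟨fun h H hH => ?_, fun h α H => ?_⟩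
  · rw [inter_comm, ← fol_nil hΛ]
    exact h [] ⟨H, hH.1⟩
  · suffices (letters Λ ∩ H.1).Countable from
      this.mono (inter_subset_inter_left _ fol_subset_letters)
    by_cases hfin : (letters Λ ∩ H.1).Finite
    · exact hfin.countable
    · rw [inter_comm]
      exact h H ⟨H.2, hfin⟩

/-- A blur shift space `Σ_Λ`, with the subspace topology, is first
countable if and only if `H ∩ B₁(Λ)` is countable for every `H ∈ V_Λ`. -/
theorem firstCountable_iff {A : Type*} (V : Set (Set A))
    (hV : IsBlurFamily V) (Λ : Set (ℕ → A)) (hΛ : IsShiftSpace Λ) :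
    @FirstCountableTopology (SigmaOf A V Λ) (subTau A V (SigmaOf A V Λ)) ↔
      ∀ H ∈ VLam A V Λ, (H ∩ letters Λ).Countable :=
  firstCountable_iff_general V Λ hΛ.2

end BlurPaper
end

section
/- Suppose the blur shift space Σ_Λ (with the subspace topology inherited from the full blur shift Σ) is first countable and at least one of the following holds: (i) V_Λ is countable; or (ii) for every H ∈ V_Λ the set H ∩ ⋃_{G ∈ V_Λ, G ≠ H} G is finite (each blurred set in V_Λ has only finitely many elements that appear in some other set of V_Λ). Then Σ_Λ is metrizable. -/
open Set Filter Topology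

namespace BlurPaper

/-!
A `T₀` space is metrizable as soon as countably many locally constant maps on it have fibres that
refine the members of a subbasis: they embed it into a countable product of discrete spaces.

First countability of `Σ_Λ` at `α H̃ H̃ …` makes `F_Λ(α) ∩ H` countable, since the points of `Λ`
starting with `α a`, for `a ∈ F_Λ(α) ∩ H`, converge to `α H̃ H̃ …` along the cofinite filter. Hence
the letters following each word can be ranked by natural numbers so that every blurred set of `V_Λ`
contains finitely many followers of each rank. Either alternative of the theorem splits `V_Λ` into
countably many levels in which a blurred set shares finitely many letters with the union of the
others; this allows enumerations of the followers in each blurred set to be glued into one ranking.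
Cutting a point off at its first letter of rank greater than `k`, and recording which blurred sets
of level `m` contain the next symbol, are then locally constant operations, and their fibres refine
the generalized cylinders.
-/

local instance {A : Type*} {V : Set (Set A)} : TopologicalSpace (FullBlur A V) := tau A V

theorem metrizableSpace_of_isLocallyConstant {X ι : Type*} {D : ι → Type*} [T : TopologicalSpace X]
    [T0Space X] [Countable ι] {S : Set (Set X)} (hS : T = TopologicalSpace.generateFrom S)
    {f : ∀ i, X → D i} (hf : ∀ i, IsLocallyConstant (f i))
    (hfS : ∀ U ∈ S, ∀ x ∈ U, ∃ i, f i ⁻¹' {f i x} ⊆ U) : TopologicalSpace.MetrizableSpace X := by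
  let (i : ι) : TopologicalSpace (D i) := ⊥
  have (i : ι) : DiscreteTopology (D i) := ⟨rfl⟩
  have hcont : Continuous fun x i => f i x := continuous_pi fun i => (hf i).continuous
  have hind : IsInducing fun x i => f i x := by
    refine ⟨le_antisymm hcont.le_induced (hS ▸ le_generateFrom fun U hU => ?_)⟩
    refine isOpen_induced_iff.2 ⟨⋃ i, (fun g => g i) ⁻¹' {d | f i ⁻¹' {d} ⊆ U},
      isOpen_iUnion fun i => (isOpen_discrete _).preimage (continuous_apply i), ?_⟩
    ext x
    simp only [mem_preimage, mem_iUnion, mem_ofPred_eq]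
    exact ⟨fun ⟨i, hi⟩ => hi rfl, hfS U hU x⟩
  have := hind.pseudoMetrizableSpace
  infer_instance

section Levels

variable {A : Type*} {𝓗 : Set (Set A)} {t : Set A → ℕ}

/-- `t` distributes the members of `𝓗` over countably many levels in such a way that every member
shares only finitely many elements with the union of the other members of any given level. -/
def AlmostDisjointLevels (𝓗 : Set (Set A)) (t : Set A → ℕ) : Prop :=
  ∀ G ∈ 𝓗, ∀ m, (G ∩ ⋃₀ {H ∈ 𝓗 | H ≠ G ∧ t H = m}).Finite

theorem exists_almostDisjointLevels_of_countable (hc : 𝓗.Countable)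
    (had : 𝓗.Pairwise fun G H => (G ∩ H).Finite) : ∃ t, AlmostDisjointLevels 𝓗 t := by
  obtain ⟨t, ht⟩ := countable_iff_exists_injOn.1 hc
  refine ⟨t, fun G hG m => ?_⟩
  have hsub : {H ∈ 𝓗 | H ≠ G ∧ t H = m}.Subsingleton :=
    fun H hH H' hH' => ht hH.1 hH'.1 (hH.2.2.trans hH'.2.2.symm)
  rw [sUnion_eq_biUnion, inter_iUnion₂]
  exact hsub.finite.biUnion fun H hH => had hG hH.1 hH.2.1.symm

theorem almostDisjointLevels_const (h : ∀ H ∈ 𝓗, (H ∩ ⋃₀ (𝓗 \ {H})).Finite) (n : ℕ) :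
    AlmostDisjointLevels 𝓗 fun _ => n := fun G hG _ =>
  (h G hG).subset <| inter_subset_inter_right _ <| sUnion_subset_sUnion fun _ hH =>
    ⟨hH.1, hH.2.1⟩

theorem AlmostDisjointLevels.exists_rank (ht : AlmostDisjointLevels 𝓗 t) {C : Set A}
    (hC : ∀ H ∈ 𝓗, (C ∩ H).Countable) :
    ∃ r : A → ℕ, ∀ H ∈ 𝓗, ∀ k, {a ∈ C ∩ H | r a ≤ k}.Finite := by
  have hmin : ∀ a ∈ ⋃₀ 𝓗, ∃ G, MinimalFor (fun H => H ∈ 𝓗 ∧ a ∈ H) t G := fun _ ⟨G, hG⟩ =>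
    exists_minimalFor_of_wellFoundedLT _ t ⟨G, hG⟩
  choose! e he using fun H hH => countable_iff_exists_injOn.1 (hC H hH)
  choose! g hg using hmin
  -- Rank `a` by the enumeration of a member of lowest level containing it.
  refine ⟨fun a => e (g a) a, fun H hH k => ?_⟩
  have henum : {a ∈ C ∩ H | e H a ≤ k}.Finite :=
    Finite.of_finite_image ((finite_Iic k).subset <| image_subset_iff.2 fun _ ha => ha.2)
      ((he H hH).mono fun _ ha => ha.1)
  have hlower : (⋃ m ∈ Iic (t H), H ∩ ⋃₀ {G ∈ 𝓗 | G ≠ H ∧ t G = m}).Finite :=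
    (finite_Iic _).biUnion fun m _ => ht H hH m
  refine (henum.union hlower).subset fun a ⟨ha, hak⟩ => ?_
  have hga := hg a ⟨H, hH, ha.2⟩
  by_cases hgH : g a = H
  · exact Or.inl ⟨ha, hgH ▸ hak⟩
  · have hle : t (g a) ≤ t H := (le_total _ _).elim id (hga.2 ⟨hH, ha.2⟩)
    exact Or.inr <| mem_biUnion hle ⟨ha.2, g a, ⟨hga.1.1, hgH, rfl⟩, hga.1.2⟩

end Levels

section Cylinders

variable {A : Type*} {V : Set (Set A)} {α β : List A} {H : {H : Set A // H ∈ V}} {F : Set A}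
  {x : FullBlur A V}

theorem mem_Z : x ∈ Z A V α ↔ ∀ (i : ℕ) (h : i < α.length), x.1 i = Sum.inl α[i] :=
  Fin.forall_iff

theorem mem_Z_nil (x : FullBlur A V) : x ∈ Z A V [] :=
  fun i => i.elim0

theorem mem_Z_concat {a : A} :
    x ∈ Z A V (α ++ [a]) ↔ x ∈ Z A V α ∧ x.1 α.length = Sum.inl a := by
  simp only [mem_Z, List.length_append, List.length_singleton, Order.lt_add_one_iff]
  constructor
  · refine fun h => ⟨fun i hi => ?_, by simpa using h α.length le_rfl⟩
    rw [h i hi.le, List.getElem_append_left hi]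
  · rintro ⟨hα, ha⟩ i hi
    rcases hi.lt_or_eq with hlt | rfl
    · rw [hα i hlt, List.getElem_append_left hlt]
    · simpa using ha

theorem Z_subset_Z_of_prefix (h : α <+: β) : Z A V β ⊆ Z A V α := by
  obtain ⟨hle, hget⟩ := List.prefix_iff_getElem.1 h
  exact fun x hx => mem_Z.2 fun i hi => by rw [mem_Z.1 hx i (hi.trans_le hle), hget i hi]

theorem prefix_of_mem_Z (hα : x ∈ Z A V α) (hβ : x ∈ Z A V β) (hle : α.length ≤ β.length) :
    α <+: β :=
  List.prefix_iff_getElem.2 ⟨hle, fun i hi =>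
    Sum.inl.inj ((mem_Z.1 hα i hi).symm.trans (mem_Z.1 hβ i (hi.trans_le hle)))⟩

theorem blur_add {m : ℕ} (h : x.1 m = Sum.inr H) (k : ℕ) : x.1 (m + k) = Sum.inr H := by
  induction k with
  | zero => exact h
  | succ k ih => exact x.2 _ _ ih

theorem eq_wordBlur (hα : x ∈ Z A V α) (hH : x.1 α.length = Sum.inr H) : x = wordBlur α H := by
  refine Subtype.ext (funext fun i => ?_)
  rcases lt_or_ge i α.length with hi | hi
  · rw [mem_Z.1 hα i hi]
    simp [wordBlur, hi]
  · obtain ⟨k, rfl⟩ := Nat.exists_eq_add_of_le hi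
    rw [blur_add hH]
    simp [wordBlur]

theorem wordBlur_mem_Z (α : List A) (H : {H : Set A // H ∈ V}) : wordBlur α H ∈ Z A V α :=
  mem_Z.2 fun i hi => by simp [wordBlur, hi]

theorem wordBlur_length (α : List A) (H : {H : Set A // H ∈ V}) :
    (wordBlur α H).1 α.length = Sum.inr H := by
  simp [wordBlur]

theorem wordBlur_mem_Z_iff : wordBlur α H ∈ Z A V β ↔ β <+: α := by
  refine ⟨fun h => prefix_of_mem_Z h (wordBlur_mem_Z α H) ?_,
    fun h => Z_subset_Z_of_prefix h (wordBlur_mem_Z α H)⟩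
  by_contra! hlt
  simpa [wordBlur_length] using mem_Z.1 h _ hlt

theorem wordBlur_inj {G : {H : Set A // H ∈ V}} (h : wordBlur α H = wordBlur β G) :
    α = β ∧ H = G := by
  have hβα : β <+: α := wordBlur_mem_Z_iff.1 (h ▸ wordBlur_mem_Z β G)
  have hαβ : α <+: β := wordBlur_mem_Z_iff.1 (h ▸ wordBlur_mem_Z α H)
  obtain rfl := hαβ.eq_of_length_le hβα.length_le
  have hHG : (Sum.inr H : Symb A V) = Sum.inr G := by
    rw [← wordBlur_length α H, h, wordBlur_length]
  exact ⟨rfl, Sum.inr.inj hHG⟩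

theorem isOpen_Z (α : List A) : IsOpen (Z A V α) :=
  TopologicalSpace.isOpen_generateFrom_of_mem (Or.inl ⟨α, rfl⟩)

theorem isOpen_ZH (hFH : F ⊆ H.1) (hF : F.Finite) : IsOpen (ZH A V α H F) :=
  TopologicalSpace.isOpen_generateFrom_of_mem (Or.inr ⟨α, H, F, hFH, hF, rfl⟩)

theorem exists_isOpen_mem_notMem_of_apply_length_ne {y : FullBlur A V} (hx : x ∈ Z A V α)
    (hxy : x.1 α.length ≠ y.1 α.length) : ∃ U, IsOpen U ∧ x ∈ U ∧ y ∉ U := by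
  rcases hxα : x.1 α.length with a | H
  · exact ⟨_, isOpen_Z (α ++ [a]), mem_Z_concat.2 ⟨hx, hxα⟩,
      fun hy => hxy (hxα.trans (mem_Z_concat.1 hy).2.symm)⟩
  · refine ⟨ZH A V α H {b ∈ H.1 | y.1 α.length = Sum.inl b},
      isOpen_ZH (fun _ hb => hb.1) ?_, ⟨hx, Or.inl hxα⟩, ?_⟩
    · exact Set.Subsingleton.finite fun b hb c hc => Sum.inl.inj (hb.2.symm.trans hc.2)
    · rintro ⟨-, hyH | ⟨b, hb, hyb⟩⟩
      · exact hxy (hxα.trans hyH.symm)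
      · exact hb.2 ⟨hb.1, hyb⟩

theorem exists_mem_Z_or_blur (x : FullBlur A V) (n : ℕ) :
    (∃ α : List A, α.length = n ∧ x ∈ Z A V α) ∨ ∃ m < n, ∃ H, x.1 m = Sum.inr H := by
  induction n with
  | zero => exact Or.inl ⟨[], rfl, mem_Z_nil x⟩
  | succ n ih =>
    rcases ih with ⟨α, rfl, hα⟩ | ⟨m, hm, hH⟩
    · rcases hx : x.1 α.length with a | H
      · exact Or.inl ⟨α ++ [a], by simp, mem_Z_concat.2 ⟨hα, hx⟩⟩
      · exact Or.inr ⟨α.length, by lia, H, hx⟩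
    · exact Or.inr ⟨m, by lia, hH⟩

theorem t1Space_fullBlur (A : Type*) (V : Set (Set A)) : T1Space (FullBlur A V) := by
  refine t1Space_iff_exists_open.2 fun x y hxy => ?_
  by_contra! hsep
  refine hxy (Subtype.ext (funext fun n => ?_))
  induction n using Nat.strong_induction_on with
  | _ n ih =>
    rcases exists_mem_Z_or_blur x n with ⟨α, rfl, hα⟩ | ⟨m, hm, H, hH⟩
    · by_contra hne
      obtain ⟨U, hU, hxU, hyU⟩ := exists_isOpen_mem_notMem_of_apply_length_ne hα hne
      exact hyU (hsep U hU hxU)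
    · obtain ⟨k, rfl⟩ := Nat.exists_eq_add_of_lt hm
      have hyH : y.1 m = Sum.inr H := ih m hm ▸ hH
      rw [add_assoc, blur_add hH, blur_add hyH]

theorem tendsto_nhds_wordBlur {ι : Type*} {l : Filter ι} {y : ι → FullBlur A V}
    (h : ∀ F : Set A, F.Finite → ∀ᶠ i in l, y i ∈ ZH A V α H F) :
    Tendsto y l (𝓝 (wordBlur α H)) := by
  have hZ : ∀ᶠ i in l, y i ∈ Z A V α := (h ∅ finite_empty).mono fun _ hi => hi.1
  refine TopologicalSpace.tendsto_nhds_generateFrom_iff.2 ?_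
  rintro _ (⟨β, rfl⟩ | ⟨β, G, F, -, hF, rfl⟩) hU
  · exact hZ.mono fun _ hi => Z_subset_Z_of_prefix (wordBlur_mem_Z_iff.1 hU) hi
  · obtain ⟨hβ, hG | ⟨a, ha, hβa⟩⟩ := hU
    · obtain ⟨rfl, rfl⟩ := wordBlur_inj (eq_wordBlur hβ hG)
      exact h F hF
    · have hβaα := wordBlur_mem_Z_iff.1 (mem_Z_concat.2 ⟨hβ, hβa⟩)
      filter_upwards [hZ] with i hi
      have hiβa := mem_Z_concat.1 (Z_subset_Z_of_prefix hβaα hi)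
      exact ⟨hiβa.1, Or.inr ⟨a, ha, hiβa.2⟩⟩

end Cylinders

section BlurShift

variable {A : Type*} {V : Set (Set A)} {Λ : Set (ℕ → A)} {α : List A} {H : {H : Set A // H ∈ V}}

theorem inLang_iff_exists_embed_mem_Z (V : Set (Set A)) :
    InLang Λ α ↔ ∃ y ∈ Λ, embed A V y ∈ Z A V α := by
  simp only [InLang, Z, embed, mem_ofPred_eq, Sum.inl.injEq]

theorem inLang_of_mem_Z_s12 {x : FullBlur A V} (hx : x ∈ SigmaOf A V Λ) (hα : x ∈ Z A V α) :
    InLang Λ α := by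
  rw [inLang_iff_exists_embed_mem_Z V]
  rcases hx with ⟨y, hy, rfl⟩ | ⟨β, G, rfl, hβ, -⟩
  · exact ⟨y, hy, hα⟩
  · obtain ⟨y, hy, hyβ⟩ := (inLang_iff_exists_embed_mem_Z V).1 hβ
    exact ⟨y, hy, Z_subset_Z_of_prefix (wordBlur_mem_Z_iff.1 hα) hyβ⟩

theorem inLang_of_mem_Fol {a : A} (ha : a ∈ Fol Λ α) : InLang Λ α := by
  obtain ⟨y, hy, hya⟩ := (inLang_iff_exists_embed_mem_Z ∅).1 ha
  exact (inLang_iff_exists_embed_mem_Z ∅).2 ⟨y, hy, (mem_Z_concat.1 hya).1⟩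

theorem Fol_subset_letters : Fol Λ α ⊆ letters Λ := by
  rintro a ⟨y, hy, hya⟩
  exact ⟨y, hy, α.length, by simpa using hya ⟨α.length, by simp⟩⟩

theorem mem_VLam_of_infinite (hH : (Fol Λ α ∩ H.1).Infinite) : H.1 ∈ VLam A V Λ :=
  ⟨H.2, hH.mono (inter_subset_inter_left _ Fol_subset_letters)⟩

theorem wordBlur_mem_SigmaOf (hH : (Fol Λ α ∩ H.1).Infinite) : wordBlur α H ∈ SigmaOf A V Λ :=
  Or.inr ⟨α, H, rfl, inLang_of_mem_Fol hH.nonempty.some_mem.1, hH⟩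

theorem infinite_Fol_inter_of_mem_SigmaOf {x : FullBlur A V} (hx : x ∈ SigmaOf A V Λ)
    (hα : x ∈ Z A V α) (hH : x.1 α.length = Sum.inr H) : (Fol Λ α ∩ H.1).Infinite := by
  rcases hx with ⟨y, -, rfl⟩ | ⟨β, G, rfl, -, hinf⟩
  · cases hH
  · obtain ⟨rfl, rfl⟩ := wordBlur_inj (eq_wordBlur hα hH)
    exact hinf

theorem countable_Fol_inter (hfc : FirstCountableTopology (SigmaOf A V Λ)) (α : List A)
    (H : {H : Set A // H ∈ V}) : (Fol Λ α ∩ H.1).Countable := by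
  by_cases hinf : (Fol Λ α ∩ H.1).Infinite
  swap
  · exact (not_infinite.1 hinf).countable
  have := t1Space_fullBlur A V
  choose y hyΛ hy using fun a : ↥(Fol Λ α ∩ H.1) => (inLang_iff_exists_embed_mem_Z V).1 a.2.1
  let x : SigmaOf A V Λ := ⟨wordBlur α H, wordBlur_mem_SigmaOf hinf⟩
  let z (a : ↥(Fol Λ α ∩ H.1)) : SigmaOf A V Λ := ⟨embed A V (y a), Or.inl ⟨y a, hyΛ a, rfl⟩⟩
  have hz : Tendsto z cofinite (𝓝 x) := by
    refine tendsto_subtype_rng.2 (tendsto_nhds_wordBlur fun F hF => ?_)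
    have hFfin : {a : ↥(Fol Λ α ∩ H.1) | a.1 ∈ F}.Finite :=
      hF.preimage Subtype.val_injective.injOn
    filter_upwards [hFfin.compl_mem_cofinite] with a ha
    exact ⟨(mem_Z_concat.1 (hy a)).1, Or.inr ⟨a, ⟨a.2.2, ha⟩, (mem_Z_concat.1 (hy a)).2⟩⟩
  have hzx (a) : z a ≠ x := fun h => by
    have hblur : (z a).1.1 α.length = Sum.inr H := h ▸ wordBlur_length α H
    cases hblur
  have hcompl : (z ⁻¹' {x})ᶜ = univ := eq_univ_of_forall hzx
  have hcount := hz.countable_compl_preimage_ker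
  rwa [ker_nhds, hcompl, countable_univ_iff] at hcount

theorem isLocallyConstant_apply_next {D : Type*} {p : SigmaOf A V Λ → List A}
    (hp : IsLocallyConstant p) (hpZ : ∀ x, x.1 ∈ Z A V (p x)) {φ : List A → Symb A V → D}
    (hφ : ∀ α (G : {H : Set A // H ∈ V}), (Fol Λ α ∩ G.1).Infinite →
      {a ∈ Fol Λ α ∩ G.1 | φ α (Sum.inl a) ≠ φ α (Sum.inr G)}.Finite) :
    IsLocallyConstant fun x => φ (p x) (x.1.1 (p x).length) := by
  refine (IsLocallyConstant.iff_eventually_eq _).2 fun x => ?_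
  rcases hx : x.1.1 (p x).length with a | G
  · have hN := ((isOpen_Z _).preimage continuous_subtype_val).mem_nhds
      (mem_Z_concat.2 ⟨hpZ x, hx⟩)
    filter_upwards [hp.eventually_eq x, hN] with y hpy hyN
    rw [hpy, (mem_Z_concat.1 hyN).2]
  · have hfin := hφ (p x) G (infinite_Fol_inter_of_mem_SigmaOf x.2 (hpZ x) hx)
    have hN := ((isOpen_ZH (fun _ ha => ha.1.2) hfin).preimage continuous_subtype_val).mem_nhds
      (show x ∈ _ from ⟨hpZ x, Or.inl hx⟩)
    filter_upwards [hp.eventually_eq x, hN] with y hpy ⟨hyα, hy⟩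
    rw [hpy]
    rcases hy with hy | ⟨a, ha, hy⟩
    · rw [hy]
    · rw [hy]
      have haF : a ∈ Fol Λ (p x) := inLang_of_mem_Z_s12 y.2 (mem_Z_concat.2 ⟨hyα, hy⟩)
      by_contra hne
      exact ha.2 ⟨⟨haF, ha.1⟩, hne⟩

end BlurShift

section Code

variable {A : Type*} {V : Set (Set A)} {Λ : Set (ℕ → A)} {r : List A → A → ℕ}
  {𝓗 : Set (Set A)} {t : Set A → ℕ} {α : List A} {x : FullBlur A V}

/-- The word `α`, extended by the symbol following it when this is a letter of rank at most `k`.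
The rank `r α a` of a letter `a` is relative to the word `α` it follows. -/
def extendLowRank (r : List A → A → ℕ) (k : ℕ) (α : List A) : Symb A V → List A
  | Sum.inl a => if r α a ≤ k then α ++ [a] else α
  | Sum.inr _ => α

/-- The longest word of length at most `n` which is an initial word of `x` and whose letters all
have rank at most `k`. -/
def lowRankPrefix (r : List A → A → ℕ) (k : ℕ) (x : FullBlur A V) : ℕ → List A
  | 0 => []
  | n + 1 => extendLowRank r k (lowRankPrefix r k x n) (x.1 (lowRankPrefix r k x n).length)

/-- The members of `𝓗` of level `m` represented by a symbol: those that contain it if it is a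
letter, and the blurred set it stands for otherwise. -/
def blursOfLevel (𝓗 : Set (Set A)) (t : Set A → ℕ) (m : ℕ) : Symb A V → Set (Set A)
  | Sum.inl a => {H ∈ 𝓗 | t H = m ∧ a ∈ H}
  | Sum.inr G => {H ∈ 𝓗 | t H = m ∧ H = G.1}

/-- The part of `x` seen at resolution `(k, n, m)`: its prefix of rank at most `k` and length at
most `n`, and the members of `𝓗` of level `m` represented by the symbol that follows this
prefix. -/
def code (r : List A → A → ℕ) (𝓗 : Set (Set A)) (t : Set A → ℕ) (i : ℕ × ℕ × ℕ)
    (x : FullBlur A V) : List A × Set (Set A) :=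
  (lowRankPrefix r i.1 x i.2.1,
    blursOfLevel 𝓗 t i.2.2 (x.1 (lowRankPrefix r i.1 x i.2.1).length))

theorem mem_Z_lowRankPrefix (r : List A → A → ℕ) (k : ℕ) (x : FullBlur A V) (n : ℕ) :
    x ∈ Z A V (lowRankPrefix r k x n) := by
  induction n with
  | zero => exact mem_Z_nil x
  | succ n ih =>
    rw [lowRankPrefix]
    rcases hx : x.1 (lowRankPrefix r k x n).length with a | G
    · rw [extendLowRank]
      split_ifs
      · exact mem_Z_concat.2 ⟨ih, hx⟩
      · exact ih
    · exact ih

theorem isLocallyConstant_lowRankPrefix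
    (hr : ∀ α, ∀ G ∈ VLam A V Λ, ∀ k, {a ∈ Fol Λ α ∩ G | r α a ≤ k}.Finite) (k n : ℕ) :
    IsLocallyConstant fun x : SigmaOf A V Λ => lowRankPrefix r k x.1 n := by
  induction n with
  | zero => exact IsLocallyConstant.const []
  | succ n ih =>
    refine isLocallyConstant_apply_next ih (fun x => mem_Z_lowRankPrefix r k x.1 n)
      fun α G hG => (hr α G (mem_VLam_of_infinite hG) k).subset fun a ⟨ha, hne⟩ => ⟨ha, ?_⟩
    by_contra hlt
    exact hne (if_neg hlt)

theorem exists_lowRankPrefix_eq (V : Set (Set A)) (r : List A → A → ℕ) (α : List A) :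
    ∃ K, ∀ k ≥ K, ∀ x ∈ Z A V α, lowRankPrefix r k x α.length = α := by
  induction α using List.reverseRecOn with
  | nil => exact ⟨0, fun _ _ _ _ => rfl⟩
  | append_singleton α a ih =>
    obtain ⟨K, hK⟩ := ih
    refine ⟨max K (r α a), fun k hk x hx => ?_⟩
    obtain ⟨hα, ha⟩ := mem_Z_concat.1 hx
    rw [List.length_append, List.length_singleton, lowRankPrefix,
      hK k (le_of_max_le_left hk) x hα, ha]
    exact if_pos (le_of_max_le_right hk)

theorem blursOfLevel_letter_eq {a : A} {G : {H : Set A // H ∈ V}} {m : ℕ} (haG : a ∈ G.1)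
    (ha : a ∉ ⋃₀ {H ∈ 𝓗 | H ≠ G.1 ∧ t H = m}) :
    blursOfLevel 𝓗 t m (Sum.inl a : Symb A V) = blursOfLevel 𝓗 t m (Sum.inr G) := by
  refine Set.ext fun H => ⟨fun ⟨hH, hm, haH⟩ => ⟨hH, hm, ?_⟩, fun ⟨hH, hm, hHG⟩ =>
    ⟨hH, hm, hHG ▸ haG⟩⟩
  by_contra hHG
  exact ha ⟨H, ⟨hH, hHG, hm⟩, haH⟩

theorem isLocallyConstant_code (ht : AlmostDisjointLevels (VLam A V Λ) t)
    (hr : ∀ α, ∀ G ∈ VLam A V Λ, ∀ k, {a ∈ Fol Λ α ∩ G | r α a ≤ k}.Finite) (i : ℕ × ℕ × ℕ) :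
    IsLocallyConstant fun x : SigmaOf A V Λ => code r (VLam A V Λ) t i x.1 := by
  have hprefix := isLocallyConstant_lowRankPrefix hr i.1 i.2.1
  refine hprefix.prodMk <| isLocallyConstant_apply_next hprefix
    (fun x => mem_Z_lowRankPrefix r i.1 x.1 i.2.1)
    (φ := fun _ => blursOfLevel (VLam A V Λ) t i.2.2) fun α G hG => ?_
  refine (ht G.1 (mem_VLam_of_infinite hG) i.2.2).subset fun a ⟨ha, hne⟩ => ⟨ha.2, ?_⟩
  exact not_not.1 (mt (blursOfLevel_letter_eq ha.2) hne)

theorem exists_code_fiber_subset_Z (r : List A → A → ℕ) (𝓗 : Set (Set A)) (t : Set A → ℕ)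
    (hx : x ∈ Z A V α) : ∃ i, code r 𝓗 t i ⁻¹' {code r 𝓗 t i x} ⊆ Z A V α := by
  obtain ⟨K, hK⟩ := exists_lowRankPrefix_eq V r α
  refine ⟨(K, α.length, 0), fun y hy => ?_⟩
  have hprefix : lowRankPrefix r K y α.length = α :=
    (congrArg Prod.fst hy).trans (hK K le_rfl x hx)
  simpa only [hprefix] using mem_Z_lowRankPrefix r K y α.length

theorem exists_code_fiber_subset_ZH (r : List A → A → ℕ) (t : Set A → ℕ)
    {H : {H : Set A // H ∈ V}} (hH : H.1 ∈ 𝓗) {F : Set A} (hF : F.Finite) (hx : x ∈ Z A V α)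
    (hxH : x.1 α.length = Sum.inr H) :
    ∃ i, code r 𝓗 t i ⁻¹' {code r 𝓗 t i x} ⊆ ZH A V α H F := by
  obtain ⟨K, hK⟩ := exists_lowRankPrefix_eq V r α
  obtain ⟨l, hl⟩ := (hF.image (r α)).bddAbove
  have hKl := hK (max K l) (le_max_left K l)
  have hxprefix : lowRankPrefix r (max K l) x (α.length + 1) = α := by
    rw [lowRankPrefix, hKl x hx, hxH, extendLowRank]
  refine ⟨(max K l, α.length + 1, t H.1), fun y hy => ?_⟩
  have hyprefix : lowRankPrefix r (max K l) y (α.length + 1) = α :=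
    (congrArg Prod.fst hy).trans hxprefix
  have hyα : y ∈ Z A V α := by
    simpa only [hyprefix] using mem_Z_lowRankPrefix r (max K l) y (α.length + 1)
  have hblurs : blursOfLevel 𝓗 t (t H.1) (y.1 α.length) =
      blursOfLevel 𝓗 t (t H.1) (Sum.inr H : Symb A V) := by
    simpa only [code, hyprefix, hxprefix, hxH] using congrArg Prod.snd hy
  have hHy : H.1 ∈ blursOfLevel 𝓗 t (t H.1) (y.1 α.length) := hblurs ▸ ⟨hH, rfl, rfl⟩
  refine ⟨hyα, ?_⟩
  rcases hya : y.1 α.length with a | G <;> rw [hya] at hHy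
  · refine Or.inr ⟨a, ⟨hHy.2.2, fun haF => ?_⟩, rfl⟩
    -- A letter of `F` has rank at most `l`, so it would have been appended to `α`.
    have hak : r α a ≤ max K l := le_max_of_le_right (hl (mem_image_of_mem _ haF))
    rw [lowRankPrefix, hKl y hyα, hya, extendLowRank, if_pos hak] at hyprefix
    simp at hyprefix
  · exact Or.inl (congrArg Sum.inr (Subtype.ext hHy.2.2.symm))

theorem exists_code_fiber_subset (r : List A → A → ℕ) (t : Set A → ℕ) {U : Set (FullBlur A V)}
    (hU : U ∈ Cylinders A V) (hxΛ : x ∈ SigmaOf A V Λ) (hxU : x ∈ U) :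
    ∃ i, code r (VLam A V Λ) t i ⁻¹' {code r (VLam A V Λ) t i x} ⊆ U := by
  rcases hU with ⟨α, rfl⟩ | ⟨α, H, F, -, hF, rfl⟩
  · exact exists_code_fiber_subset_Z r _ t hxU
  · obtain ⟨hx, hxH | ⟨a, ha, hxa⟩⟩ := hxU
    · exact exists_code_fiber_subset_ZH r t
        (mem_VLam_of_infinite (infinite_Fol_inter_of_mem_SigmaOf hxΛ hx hxH)) hF hx hxH
    · obtain ⟨i, hi⟩ := exists_code_fiber_subset_Z r (VLam A V Λ) t (mem_Z_concat.2 ⟨hx, hxa⟩)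
      refine ⟨i, hi.trans fun y hy => ?_⟩
      exact ⟨(mem_Z_concat.1 hy).1, Or.inr ⟨a, ha, (mem_Z_concat.1 hy).2⟩⟩

end Code

theorem metrizable_of_firstCountable_general {A : Type*} {V : Set (Set A)} {Λ : Set (ℕ → A)}
    (hfc : FirstCountableTopology (SigmaOf A V Λ)) {t : Set A → ℕ}
    (ht : AlmostDisjointLevels (VLam A V Λ) t) :
    TopologicalSpace.MetrizableSpace (SigmaOf A V Λ) := by
  choose r hr using fun α => ht.exists_rank (C := Fol Λ α)
    fun H hH => countable_Fol_inter hfc α ⟨H, hH.1⟩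
  have := t1Space_fullBlur A V
  refine metrizableSpace_of_isLocallyConstant induced_generateFrom_eq
    (isLocallyConstant_code ht hr) ?_
  rintro _ ⟨U, hU, rfl⟩ x hxU
  obtain ⟨i, hi⟩ := exists_code_fiber_subset r t hU x.2 hxU
  exact ⟨i, preimage_mono hi⟩

/-- If a blur shift space `Σ_Λ` is first countable and either
`V_Λ` is countable, or each `H ∈ V_Λ` has only finitely many elements appearing in
some other member of `V_Λ`, then `Σ_Λ` is metrizable. -/
theorem metrizable_of_firstCountable {A : Type*} (V : Set (Set A))
    (hV : IsBlurFamily V) (Λ : Set (ℕ → A)) (hΛ : IsShiftSpace Λ)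
    (hfc : @FirstCountableTopology (SigmaOf A V Λ) (subTau A V (SigmaOf A V Λ)))
    (hcond : (VLam A V Λ).Countable ∨
      ∀ H ∈ VLam A V Λ, (H ∩ ⋃₀ (VLam A V Λ \ {H})).Finite) :
    @TopologicalSpace.MetrizableSpace (SigmaOf A V Λ)
      (subTau A V (SigmaOf A V Λ)) := by
  obtain ⟨t, ht⟩ : ∃ t, AlmostDisjointLevels (VLam A V Λ) t :=
    hcond.elim (exists_almostDisjointLevels_of_countable · fun G hG H hH => hV.2 G hG.1 H hH.1)
      fun h => ⟨_, almostDisjointLevels_const h 0⟩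
  exact metrizable_of_firstCountable_general hfc ht

end BlurPaper
end
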